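/- arXiv:1804.01898 — 4 statements merged into one kernel-verified Lean document; each statement's English description precedes it below -/
import Mathlib

section
/- Let P(s) = 48s^8 - 56s^7 + 92s^6 - 90s^5 + 86s^4 + 324s^3 + 317s^2 + 182s + 48 and Q(s) = 24s^8 - 28s^7 + 22s^6 - 5s^5 + 43s^4 + 112s^3 + 100s^2 + 50s + 12. For every integer s ≥ 3 one has Q(s) > 0 and 3·P(s)/Q(s) < 6 + 12/(2s^2 + s + 2). -/
/-- The numerator polynomial `P` from Theorem 0.3 of the paper. -/
def Ppoly (x : ℚ) : ℚ :=
  48*x^8 - 56*x^7 + 92*x^6 - 90*x^5 + 86*x^4 + 324*x^3 + 317*x^2 + 182*x + 48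

/-- The denominator polynomial `Q` from Theorem 0.3 of the paper. -/
def Qpoly (x : ℚ) : ℚ :=
  24*x^8 - 28*x^7 + 22*x^6 - 5*x^5 + 43*x^4 + 112*x^3 + 100*x^2 + 50*x + 12

/-!
Subtracting `6` from both slopes leaves `3 (P - 2 Q) / Q` against `12 / (2s² + s + 2)`. The
difference of `4 Q` and `(P - 2 Q) (2s² + s + 2)` splits into linear factors over `ℚ`, and its
largest root is `s = 2`.
-/

theorem Qpoly_pos_of_nonneg {x : ℚ} (hx : 0 ≤ x) : 0 < Qpoly x :=
  calc
    0 < (14 * x ^ 6 + 5 / 2 * x ^ 4) * (x - 1) ^ 2 + 10 * x ^ 8 + 11 / 2 * x ^ 6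
          + 81 / 2 * x ^ 4 + 112 * x ^ 3 + 100 * x ^ 2 + 50 * x + 12 := by positivity
    _ = Qpoly x := by unfold Qpoly; ring

theorem four_mul_Qpoly_sub_mul_eq (x : ℚ) :
    4 * Qpoly x - (Ppoly x - 2 * Qpoly x) * (2 * x ^ 2 + x + 2)
      = 3 * x * (x - 2) * (2 * x - 1) * (2 * x + 1) ^ 2 * (3 * x + 2) := by
  unfold Ppoly Qpoly
  ring

theorem brill_noether_slope_sub_slope {x : ℚ} (hQ : Qpoly x ≠ 0) :
    6 + 12 / (2 * x ^ 2 + x + 2) - 3 * Ppoly x / Qpoly x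
      = 9 * x * (x - 2) * (2 * x - 1) * (2 * x + 1) ^ 2 * (3 * x + 2)
          / ((2 * x ^ 2 + x + 2) * Qpoly x) := by
  have hB : 0 < 2 * x ^ 2 + x + 2 := by nlinarith [sq_nonneg (x + 1)]
  rw [add_div' _ _ _ hB.ne', div_sub_div _ _ hB.ne' hQ]
  congr 1
  linear_combination 3 * four_mul_Qpoly_sub_mul_eq x

theorem slope_lt_brill_noether_general {x : ℚ} (hx : 2 < x) :
    0 < Qpoly x ∧ 3 * Ppoly x / Qpoly x < 6 + 12 / (2 * x ^ 2 + x + 2) := by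
  have hx₀ : 0 < x := two_pos.trans hx
  have : 0 < x - 2 := sub_pos.2 hx
  have : 0 < 2 * x - 1 := by linarith
  have hQ : 0 < Qpoly x := Qpoly_pos_of_nonneg hx₀.le
  refine ⟨hQ, sub_pos.1 ?_⟩
  rw [brill_noether_slope_sub_slope hQ.ne']
  positivity

/-- For every integer `s ≥ 3`, one has `Q(s) > 0` and
`3·P(s)/Q(s) < 6 + 12/(2s² + s + 2)`. -/
theorem slope_lt_brill_noether (s : ℤ) (hs : 3 ≤ s) :
    0 < Qpoly (s : ℚ) ∧
      3 * Ppoly (s : ℚ) / Qpoly (s : ℚ) < 6 + 12 / (2*(s:ℚ)^2 + (s:ℚ) + 2) :=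
  slope_lt_brill_noether_general (by exact_mod_cast hs)
end

section
/- Fix an integer s ≥ 1. Define r : ℤ → ℚ by r(n) = 1/n! for n ≥ 0 and r(n) = 0 for n < 0. Then the determinant of the (2s+1)×(2s+1) matrix with (j,ℓ)-entry r(s + ℓ − j), for 1 ≤ j, ℓ ≤ 2s+1, equals ∏_{k=0}^{2s} k!/(s+k)!. -/
/-!
The function `r` satisfies `r (m - 1) = m * r m`, the functional equation of `1 / Γ (m + 1)`, so
that `r (a - j) = r a * a (a - 1) ⋯ (a - j + 1)` for every integer `a`. In the matrix with entries
`r (a ℓ - j)`, pulling `r (a ℓ)` out of column `ℓ` therefore leaves in row `j` the values at the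
points `a ℓ` of a monic polynomial of degree `j`, and the remaining determinant is the Vandermonde
determinant of these points. For `a ℓ = s + ℓ` it is, by translation invariance, that of
`0, 1, 2, …`, which is a product of factorials.
-/

/-- `r(n) = 1/n!` for `n ≥ 0` and `r(n) = 0` for `n < 0`. -/
def rfact (n : ℤ) : ℚ := if 0 ≤ n then 1 / (Nat.factorial n.toNat : ℚ) else 0

open Finset Matrix

lemma rfact_natCast (n : ℕ) : rfact n = 1 / (n.factorial : ℚ) := by
  simp [rfact]

lemma rfact_of_neg {m : ℤ} (hm : m < 0) : rfact m = 0 :=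
  if_neg hm.not_ge

lemma rfact_sub_one (m : ℤ) : rfact (m - 1) = m * rfact m := by
  obtain hm | rfl | hm := lt_trichotomy m 0
  · rw [rfact_of_neg hm, rfact_of_neg (by omega), mul_zero]
  · rw [rfact_of_neg (by omega), Int.cast_zero, zero_mul]
  · obtain ⟨n, rfl⟩ : ∃ n : ℕ, m = (n + 1 : ℕ) := ⟨(m - 1).toNat, by omega⟩
    have hpred : ((n + 1 : ℕ) : ℤ) - 1 = n := by simp
    rw [hpred, rfact_natCast, rfact_natCast, Nat.factorial_succ]
    push_cast
    field_simp

lemma rfact_sub_natCast (a : ℤ) (j : ℕ) :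
    rfact (a - j) = rfact a * (descPochhammer ℚ j).eval (a : ℚ) := by
  induction j with
  | zero => simp
  | succ j ih =>
    calc rfact (a - (j + 1 : ℕ)) = rfact (a - j - 1) := by push_cast; ring_nf
      _ = (a - j : ℤ) * (rfact a * (descPochhammer ℚ j).eval (a : ℚ)) := by
        rw [rfact_sub_one, ih]
      _ = rfact a * (descPochhammer ℚ (j + 1)).eval (a : ℚ) := by
        rw [descPochhammer_succ_eval]; push_cast; ring

lemma det_rfact_sub {n : ℕ} (a : Fin n → ℤ) :
    det (of fun j ℓ : Fin n => rfact (a ℓ - (j : ℕ))) =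
      (∏ ℓ, rfact (a ℓ)) * det (vandermonde fun ℓ => (a ℓ : ℚ)) := by
  rw [det_eval_matrixOfPolynomials_eq_det_vandermonde _ (fun j : Fin n => descPochhammer ℚ j)
    (fun j => descPochhammer_natDegree ℚ j) (fun j => monic_descPochhammer ℚ j),
    ← det_transpose (of _), ← det_mul_column]
  congr 1
  ext ℓ j
  exact rfact_sub_natCast (a ℓ) j

lemma det_vandermonde_natCast_fin (R : Type*) [CommRing R] (n : ℕ) :
    det (vandermonde fun i : Fin n => ((i : ℕ) : R)) = ∏ k ∈ range n, (k.factorial : R) := by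
  cases n with
  | zero => simp
  | succ n =>
    rw [det_vandermonde_id_eq_superFactorial, ← Nat.prod_range_succ_factorial, Nat.cast_prod]

theorem harris_tu_determinant_general (s : ℤ) (n : ℕ) :
    det (of fun j ℓ : Fin n => rfact (s + (ℓ : ℕ) - (j : ℕ))) =
      ∏ k ∈ range n, (k.factorial : ℚ) * rfact (s + k) := by
  have hshift : (fun ℓ : Fin n => ((s + (ℓ : ℕ) : ℤ) : ℚ)) =
      fun ℓ : Fin n => ((ℓ : ℕ) : ℚ) + s := by
    ext ℓ
    push_cast
    ring
  rw [det_rfact_sub fun ℓ : Fin n => s + (ℓ : ℕ), hshift, det_vandermonde_add,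
    det_vandermonde_natCast_fin, Fin.prod_univ_eq_prod_range (fun k : ℕ => rfact (s + k)),
    prod_mul_distrib, mul_comm]

/-- The determinant of the `(2s+1)×(2s+1)` matrix with `(j,ℓ)`-entry `r(s + ℓ − j)`
(for `1 ≤ j, ℓ ≤ 2s+1`) equals `∏_{k=0}^{2s} k!/(s+k)!`. -/
theorem harris_tu_determinant (s : ℕ) (hs : 1 ≤ s) :
    Matrix.det (Matrix.of fun j ℓ : Fin (2*s + 1) =>
        rfact ((s : ℤ) + (ℓ : ℕ) - (j : ℕ))) =
      ∏ k ∈ Finset.range (2*s + 1),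
        (Nat.factorial k : ℚ) / (Nat.factorial (s + k) : ℚ) := by
  rw [harris_tu_determinant_general]
  simp only [← Nat.cast_add, rfact_natCast, mul_one_div]
end

section
/- Fix an integer s ≥ 2. Define r : ℤ → ℚ by r(n) = 1/n! for n ≥ 0 and r(n) = 0 for n < 0. Let (i₁,…,i_{2s+1}) be given by i_j = 1 for 1 ≤ j ≤ 2s−2 and i_{2s−1} = i_{2s} = i_{2s+1} = 0. Then the determinant of the (2s+1)×(2s+1) matrix with (j,ℓ)-entry r(s − 1 + i_j − j + ℓ) equals (s²(s+1)(s+2)(2s−1)(2s+1)/3)·∏_{k=0}^{2s} k!/(s+k)!. -/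
open Finset Matrix Nat

section Vandermonde

variable {R : Type*} [CommRing R]

lemma det_descFactorial_eq_det_vandermonde [IsDomain R] {N : ℕ} (c : Fin N → ℕ) :
    det (of fun j l : Fin N => ((c j).descFactorial l : R)) =
      det (vandermonde fun j => (c j : R)) := by
  simp only [← descPochhammer_eval_eq_descFactorial]
  exact (det_eval_matrixOfPolynomials_eq_det_vandermonde _ (fun l : Fin N => descPochhammer R l)
    (fun l => descPochhammer_natDegree R l) (fun l => monic_descPochhammer R l)).symm

lemma det_vandermonde_eq_prod_range (N : ℕ) (v : ℕ → R) :
    det (vandermonde fun j : Fin N => v j) =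
      ∏ j ∈ range N, ∏ i ∈ range j, (v j - v i) := by
  rw [det_vandermonde, ← Fin.prod_univ_eq_prod_range fun j => ∏ i ∈ range j, (v j - v i),
    prod_comm' (t' := univ) (s' := fun j => Iio j) (by simp)]
  refine prod_congr rfl fun j _ => ?_
  rw [← Nat.Iio_eq_range, ← Fin.map_valEmbedding_Iio, prod_map]
  rfl

end Vandermonde

lemma rfact_natCast_sub (c l : ℕ) : rfact ((c : ℤ) - l) = c.descFactorial l / c ! := by
  unfold rfact
  by_cases h : l ≤ c
  · rw [if_pos (by omega), show ((c : ℤ) - l).toNat = c - l by omega,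
      div_eq_div_iff (by positivity) (by positivity), one_mul, mul_comm]
    exact_mod_cast (factorial_mul_descFactorial h).symm
  · rw [if_neg (by omega), descFactorial_of_lt (by omega), cast_zero, zero_div]

lemma det_rfact_natCast_sub (N : ℕ) (c : ℕ → ℕ) :
    det (of fun j l : Fin N => rfact ((c j : ℤ) - (l : ℕ))) =
      ∏ j ∈ range N, (∏ i ∈ range j, ((c j : ℚ) - c i)) / (c j)! := by
  have row_scaled := det_mul_column (fun j : Fin N => ((c j)! : ℚ)⁻¹)
    (of fun j l : Fin N => ((c j).descFactorial l : ℚ))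
  simp only [of_apply, ← div_eq_inv_mul, ← rfact_natCast_sub] at row_scaled
  rw [row_scaled, det_descFactorial_eq_det_vandermonde,
    det_vandermonde_eq_prod_range N fun j => (c j : ℚ),
    Fin.prod_univ_eq_prod_range (fun j => ((c j)! : ℚ)⁻¹), prod_inv_distrib, prod_div_distrib,
    div_eq_inv_mul]

/-- The increasing enumeration of `ℕ \ {m}`: the analogue on `ℕ` of `Fin.succAbove`. In the
determinant it lists the row offsets from the bottom up, `m` being the number of rows with
`i_j = 0`. -/
def skip (m j : ℕ) : ℕ := if j < m then j else j + 1

lemma skip_of_lt {m j : ℕ} (h : j < m) : skip m j = j := if_pos h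

lemma skip_of_le {m j : ℕ} (h : m ≤ j) : skip m j = j + 1 := if_neg h.not_gt

lemma prod_range_skip_sub_of_lt {m j : ℕ} (h : j < m) :
    ∏ i ∈ range j, ((skip m j : ℚ) - skip m i) = j ! := by
  rw [← descFactorial_self, descFactorial_eq_prod_range, ← prod_range_natCast_sub, skip_of_lt h]
  refine prod_congr rfl fun i hi => ?_
  rw [skip_of_lt ((mem_range.mp hi).trans h)]

lemma prod_range_skip_add_sub (m k : ℕ) :
    ∏ i ∈ range (m + k), ((skip m (m + k) : ℚ) - skip m i) = (m + k + 1)! / (k + 1) := by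
  have below : ∏ i ∈ range m, ((skip m (m + k) : ℚ) - skip m i) =
      (m + k + 1).descFactorial m := by
    rw [descFactorial_eq_prod_range, ← prod_range_natCast_sub, skip_of_le (by omega)]
    refine prod_congr rfl fun i hi => ?_
    rw [skip_of_lt (mem_range.mp hi)]
  have above : ∏ i ∈ range k, ((skip m (m + k) : ℚ) - skip m (m + i)) = k ! := by
    rw [← descFactorial_self, descFactorial_eq_prod_range, ← prod_range_natCast_sub,
      skip_of_le (by omega)]
    refine prod_congr rfl fun i _ => ?_
    rw [skip_of_le (by omega)]
    push_cast
    ring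
  have hfact : (k + 1)! * (m + k + 1).descFactorial m = (m + k + 1)! := by
    simpa [show m + k + 1 - m = k + 1 by omega] using
      factorial_mul_descFactorial (show m ≤ m + k + 1 by omega)
  rw [prod_range_add, below, above, eq_div_iff (by positivity), ← hfact, factorial_succ]
  push_cast
  ring

lemma prod_range_add_div_eq_choose (m n : ℕ) :
    ∏ k ∈ range n, ((m + k + 1 : ℚ) / (k + 1)) = (m + n).choose n := by
  have num : ∏ k ∈ range n, (m + k + 1 : ℚ) = n ! * (m + n).choose n := by
    rw [← cast_mul, ← ascFactorial_eq_factorial_mul_choose, ascFactorial_eq_prod_range]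
    push_cast
    exact prod_congr rfl fun k _ => by ring
  have den : ∏ k ∈ range n, (k + 1 : ℚ) = n ! := by
    exact_mod_cast prod_range_add_one_eq_factorial n
  rw [prod_div_distrib, num, den, mul_div_cancel_left₀ _ (by positivity)]

lemma prod_skip_sub_div_factorial (t m n : ℕ) :
    ∏ j ∈ range (m + n),
        (∏ i ∈ range j, ((skip m j : ℚ) - skip m i)) / (t + skip m j)! =
      (t + 1).ascFactorial m * (m + n).choose n *
        ∏ k ∈ range (m + n), (k ! : ℚ) / (t + 1 + k)! := by
  have lower : ∀ j ∈ range m,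
      (∏ i ∈ range j, ((skip m j : ℚ) - skip m i)) / (t + skip m j)! =
        ((t + 1 + j : ℕ) : ℚ) * (j ! / (t + 1 + j)!) := fun j hj => by
    rw [prod_range_skip_sub_of_lt (mem_range.mp hj), skip_of_lt (mem_range.mp hj),
      show t + 1 + j = t + j + 1 by ring, factorial_succ]
    push_cast
    field_simp
  have upper : ∀ k ∈ range n,
      (∏ i ∈ range (m + k), ((skip m (m + k) : ℚ) - skip m i)) / (t + skip m (m + k))! =
        (m + k + 1) / (k + 1) * ((m + k)! / (t + 1 + (m + k))!) := fun k _ => by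
    rw [prod_range_skip_add_sub, skip_of_le (by omega),
      show t + (m + k + 1) = t + 1 + (m + k) by ring, factorial_succ]
    push_cast
    ring
  rw [prod_range_add, prod_range_add, prod_congr rfl lower, prod_congr rfl upper,
    prod_mul_distrib, prod_mul_distrib, prod_range_add_div_eq_choose, ascFactorial_eq_prod_range]
  push_cast
  ring

lemma det_rfact_add_ite_lt (t : ℕ) {n N : ℕ} (h : n ≤ N) :
    det (of fun j l : Fin N =>
        rfact ((t : ℤ) + (if (j : ℕ) < n then 1 else 0) + (l : ℕ) - (j : ℕ))) =
      (t + 1).ascFactorial (N - n) * N.choose n *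
        ∏ k ∈ range N, (k ! : ℚ) / (t + 1 + k)! := by
  obtain ⟨m, rfl⟩ := Nat.exists_eq_add_of_le' h
  have entries_rev : (of fun j l : Fin (m + n) =>
        rfact ((t : ℤ) + (if (j : ℕ) < n then 1 else 0) + (l : ℕ) - (j : ℕ))).submatrix
          Fin.revPerm Fin.revPerm =
      of fun j l : Fin (m + n) => rfact (((t + skip m j : ℕ) : ℤ) - (l : ℕ)) := by
    ext j l
    simp only [submatrix_apply, of_apply, Fin.revPerm_apply, Fin.val_rev, skip]
    congr 1
    split_ifs <;> omega
  rw [← det_submatrix_equiv_self Fin.revPerm, entries_rev,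
    det_rfact_natCast_sub _ fun j => t + skip m j, Nat.add_sub_cancel]
  simp only [cast_add, add_sub_add_left_eq_sub]
  exact prod_skip_sub_div_factorial t m n

/-- For `i_j = 1` for `1 ≤ j ≤ 2s−2` and `i_{2s−1} = i_{2s} = i_{2s+1} = 0`, the
determinant of the `(2s+1)×(2s+1)` matrix with `(j,ℓ)`-entry `r(s − 1 + i_j − j + ℓ)`
equals `(s²(s+1)(s+2)(2s−1)(2s+1)/3)·∏_{k=0}^{2s} k!/(s+k)!`. -/
theorem harris_tu_determinant_theta_cubed (s : ℕ) (hs : 2 ≤ s) :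
    Matrix.det (Matrix.of fun j ℓ : Fin (2*s + 1) =>
        rfact ((s : ℤ) - 1 + (if (j : ℕ) < 2*s - 2 then 1 else 0) + (ℓ : ℕ) - (j : ℕ))) =
      (s : ℚ)^2 * ((s : ℚ) + 1) * ((s : ℚ) + 2) * (2*(s : ℚ) - 1) * (2*(s : ℚ) + 1) / 3 *
        ∏ k ∈ Finset.range (2*s + 1),
          (Nat.factorial k : ℚ) / (Nat.factorial (s + k) : ℚ) := by
  obtain ⟨t, rfl⟩ : ∃ t, s = t + 1 := ⟨s - 1, by omega⟩
  have shift : ((t + 1 : ℕ) : ℤ) - 1 = t := by simp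
  have hasc : ((t + 1).ascFactorial 3 : ℚ) = (t + 1) * (t + 2) * (t + 3) := by
    simp only [ascFactorial]
    push_cast
    ring
  have hchoose : ((2 * t + 3).choose (2 * t) : ℚ) =
      (2 * t + 3) * (2 * t + 2) * (2 * t + 1) / 6 := by
    rw [cast_add_choose]
    simp only [factorial]
    push_cast
    field_simp
    ring
  rw [shift, det_rfact_add_ite_lt t (by omega : 2 * (t + 1) - 2 ≤ 2 * (t + 1) + 1),
    show 2 * (t + 1) + 1 - (2 * (t + 1) - 2) = 3 by omega,
    show 2 * (t + 1) - 2 = 2 * t by omega, show 2 * (t + 1) + 1 = 2 * t + 3 by ring, hasc, hchoose]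
  push_cast
  ring
end

section
/- Fix an integer s ≥ 2. Define r : ℤ → ℚ by r(n) = 1/n! for n ≥ 0 and r(n) = 0 for n < 0. Let (i₁,…,i_{2s+1}) be given by i₁ = 3, i_j = 1 for 2 ≤ j ≤ 2s−2, and i_{2s−1} = i_{2s} = i_{2s+1} = 0. Then the determinant of the (2s+1)×(2s+1) matrix with (j,ℓ)-entry r(s − 1 + i_j − j + ℓ) equals (s(2s+1)(s−1)(s+1)²(s+2)(2s−1)(2s+3)/(3(3s+1)(3s+2)))·∏_{k=0}^{2s} k!/(s+k)!. -/
open Finset Matrix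
open scoped Nat

section Vandermonde

variable {R : Type*} [CommRing R] {n : ℕ}

lemma prod_Ioi_succAbove_sub (v : Fin (n + 1) → R) (p : Fin (n + 1)) (i : Fin n) :
    ∏ j ∈ Ioi (p.succAbove i), (v j - v (p.succAbove i)) =
      (if p.succAbove i < p then v p - v (p.succAbove i) else 1) *
        ∏ j ∈ Ioi i, (v (p.succAbove j) - v (p.succAbove i)) := by
  simp only [← filter_lt_eq_Ioi, prod_filter, Fin.prod_univ_succAbove _ p,
    Fin.succAbove_lt_succAbove_iff]

lemma det_vandermonde_succAbove (v : Fin (n + 1) → R) (p : Fin (n + 1)) :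
    (vandermonde v).det =
      (∏ i ∈ Iio p, (v p - v i)) * (∏ i ∈ Ioi p, (v i - v p)) *
        (vandermonde (v ∘ p.succAbove)).det := by
  have below : ∏ i : Fin n, (if p.succAbove i < p then v p - v (p.succAbove i) else 1) =
      ∏ i ∈ Iio p, (v p - v i) := by
    simp [← filter_gt_eq_Iio, prod_filter, Fin.prod_univ_succAbove _ p]
  simp only [det_vandermonde, Fin.prod_univ_succAbove _ p, prod_Ioi_succAbove_sub,
    prod_mul_distrib, below, Function.comp_apply]
  ring

lemma prod_Iio_val_sub (p : Fin n) :
    ∏ i ∈ Iio p, (((p : ℕ) : R) - (i : ℕ)) = ((p : ℕ)! : R) := by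
  rw [← Nat.descFactorial_self, Nat.descFactorial_eq_prod_range, ← prod_range_natCast_sub,
    ← Nat.Iio_eq_range, ← Fin.map_valEmbedding_Iio, prod_map]
  rfl

lemma prod_Ioi_sub_val (p : Fin (n + 1)) :
    ∏ i ∈ Ioi p, (((i : ℕ) : R) - (p : ℕ)) = ((n - p)! : R) := by
  calc
    _ = ∏ i ∈ Ico ((p : ℕ) + 1) (n + 1), ((i : R) - (p : ℕ)) := by
      rw [Ico_add_one_left_eq_Ioo, ← Fin.map_valEmbedding_Ioi, prod_map]
      rfl
    _ = ∏ i ∈ range (n - p), ((i : R) + 1) := by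
      rw [prod_Ico_eq_prod_range, Nat.add_sub_add_right]
      exact prod_congr rfl fun i _ => by push_cast; ring
    _ = _ := by exact_mod_cast congrArg (Nat.cast (R := R)) (prod_range_add_one_eq_factorial _)

end Vandermonde

lemma rfact_natCast_sub_natCast (c m : ℕ) :
    rfact ((c : ℤ) - m) = (c ! : ℚ)⁻¹ * (descPochhammer ℚ m).eval (c : ℚ) := by
  rw [descPochhammer_eval_eq_descFactorial, rfact]
  split_ifs with h
  · have hm : m ≤ c := by lia
    rw [show ((c : ℤ) - m).toNat = c - m by lia, ← Nat.factorial_mul_descFactorial hm]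
    have : (c.descFactorial m : ℚ) ≠ 0 := mod_cast (Nat.descFactorial_pos.mpr hm).ne'
    push_cast
    field_simp
  · simp [Nat.descFactorial_of_lt (show c < m by lia)]

/-- The matrix `1/(c_k - m)!`, with `1/i! = 0` for `i < 0`, attached to a sequence of nodes `c`.
Rows and columns are in the reverse of the Jacobi–Trudi order: the nodes of a partition `μ` are the
increasing sequence `μ_{n-k} + k`, `0 ≤ k < n`. -/
def rfactMatrix {n : ℕ} (c : Fin n → ℕ) : Matrix (Fin n) (Fin n) ℚ :=
  of fun k m => rfact ((c k : ℤ) - (m : ℕ))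

namespace rfactMatrix

variable {n : ℕ}

lemma det_eq_vandermonde (c : Fin n → ℕ) :
    (rfactMatrix c).det = (∏ k, ((c k)! : ℚ)⁻¹) * (vandermonde fun k => (c k : ℚ)).det := by
  have hM : rfactMatrix c = of fun k m => ((c k)! : ℚ)⁻¹ *
      of (fun k m : Fin n => (descPochhammer ℚ m).eval (c k : ℚ)) k m := by
    ext k m
    exact rfact_natCast_sub_natCast (c k) m
  rw [hM, det_mul_column,
    ← det_eval_matrixOfPolynomials_eq_det_vandermonde _ (fun m : Fin n => descPochhammer ℚ m)
      (fun m => descPochhammer_natDegree ℚ m) (fun m => monic_descPochhammer ℚ m)]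

lemma det_succAbove (c : Fin (n + 1) → ℕ) (p : Fin (n + 1)) :
    (rfactMatrix c).det =
      (∏ i ∈ Iio p, ((c p : ℚ) - c i)) * (∏ i ∈ Ioi p, ((c i : ℚ) - c p)) / (c p)! *
        (rfactMatrix (c ∘ p.succAbove)).det := by
  simp only [det_eq_vandermonde, det_vandermonde_succAbove _ p, Fin.prod_univ_succAbove _ p,
    Function.comp_def]
  ring

lemma det_castSucc (c : Fin (n + 1) → ℕ) :
    (rfactMatrix c).det =
      (∏ i : Fin n, ((c (Fin.last n) : ℚ) - c i.castSucc)) / (c (Fin.last n))! *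
        (rfactMatrix (c ∘ Fin.castSucc)).det := by
  rw [det_succAbove c (Fin.last n), Fin.succAbove_last]
  simp [Fin.Iio_last_eq_map, Ioi_eq_empty.mpr fun i _ => Fin.le_last i]

lemma det_interval (n b : ℕ) :
    (rfactMatrix fun k : Fin n => b + k).det = ∏ k ∈ range n, (k ! : ℚ) / (b + k)! := by
  induction n with
  | zero => simp
  | succ n ih =>
    have hn : ∏ i : Fin n, (((b + n : ℕ) : ℚ) - (b + i : ℕ)) = n ! := by
      simp only [Nat.cast_add, add_sub_add_left_eq_sub]
      rw [Fin.prod_univ_eq_prod_range (fun i => (n : ℚ) - i), prod_range_natCast_sub,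
        ← Nat.descFactorial_eq_prod_range, Nat.descFactorial_self]
    rw [det_castSucc, prod_range_succ, ← ih, mul_comm]
    simp only [Fin.val_last, Fin.val_castSucc, Function.comp_def, hn]

lemma det_interval_succAbove (b : ℕ) (p : Fin (n + 1)) :
    (rfactMatrix fun k : Fin n => b + p.succAbove k).det =
      (b + p)! / (p ! * (n - p)!) * ∏ k ∈ range (n + 1), (k ! : ℚ) / (b + k)! := by
  rw [← det_interval, det_succAbove _ p]
  simp only [Nat.cast_add, add_sub_add_left_eq_sub, prod_Iio_val_sub, prod_Ioi_sub_val,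
    Function.comp_def]
  field_simp

lemma det_snoc_interval_succAbove (b : ℕ) (p : Fin (n + 1)) {q : ℕ} (hq : q ≠ p) :
    (rfactMatrix (Fin.snoc (α := fun _ => ℕ) (fun k : Fin n => b + p.succAbove k) (b + q))).det =
      q.descFactorial (n + 1) / ((q - p) * (b + q)!) * ((b + p)! / (p ! * (n - p)!)) *
        ∏ k ∈ range (n + 1), (k ! : ℚ) / (b + k)! := by
  have hq' : (q : ℚ) - (p : ℕ) ≠ 0 := sub_ne_zero.mpr (mod_cast hq)
  have hprod : ((q : ℚ) - (p : ℕ)) * ∏ i : Fin n, ((q : ℚ) - (p.succAbove i : ℕ)) =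
      q.descFactorial (n + 1) := by
    rw [Nat.descFactorial_eq_prod_range, ← prod_range_natCast_sub,
      ← Fin.prod_univ_eq_prod_range (fun i => (q : ℚ) - i), Fin.prod_univ_succAbove _ p]
  rw [det_castSucc, mul_assoc, ← det_interval_succAbove, ← hprod]
  simp only [Fin.snoc_last, Fin.snoc_castSucc, Function.comp_def, Nat.cast_add,
    add_sub_add_left_eq_sub]
  field_simp

end rfactMatrix

lemma prod_factorial_div_factorial_add_eq_shift (n b : ℕ) :
    ∏ k ∈ range n, (k ! : ℚ) / (b + k)! =
      (b + n)! / b ! * ∏ k ∈ range n, (k ! : ℚ) / (b + 1 + k)! := by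
  induction n with
  | zero => simp [field]
  | succ n ih =>
    rw [prod_range_succ, prod_range_succ, ih, show b + 1 + n = b + (n + 1) by ring]
    field_simp

lemma submatrix_revPerm_eq_rfactMatrix (s : ℕ) (hs : 2 ≤ s) :
    (of fun j ℓ : Fin (2 * s + 1) => rfact ((s : ℤ) - 1 +
        (if (j : ℕ) = 0 then 3 else if (j : ℕ) < 2 * s - 2 then 1 else 0) +
        (ℓ : ℕ) - (j : ℕ))).submatrix Fin.revPerm Fin.revPerm =
      rfactMatrix (Fin.snoc (α := fun _ => ℕ)
        (fun k : Fin (2 * s) => s - 1 + (⟨3, by lia⟩ : Fin (2 * s + 1)).succAbove k)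
        (s - 1 + (2 * s + 3))) := by
  ext k m
  simp only [rfactMatrix, submatrix_apply, of_apply, Fin.revPerm_apply, Fin.val_rev]
  congr 1
  have hm := m.isLt
  induction k using Fin.lastCases with
  | last =>
    simp only [Fin.snoc_last, Fin.val_last]
    split_ifs <;> lia
  | cast k =>
    simp only [Fin.snoc_castSucc, Fin.val_castSucc, Fin.succAbove, Fin.lt_def]
    split_ifs <;> simp only [Fin.val_castSucc, Fin.val_succ] <;> lia

lemma node_exchange_factor_eq (s : ℕ) (hs : 2 ≤ s) :
    ((2 * s + 3).descFactorial (2 * s + 1) : ℚ) / (2 * s * (3 * s + 2)!) *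
        ((s + 2)! / (3 ! * (2 * s - 3)!)) * ((3 * s)! / (s - 1)!) =
      s * (2 * s + 1) * (s - 1) * (s + 1) ^ 2 * (s + 2) * (2 * s - 1) * (2 * s + 3) /
        (3 * (3 * s + 1) * (3 * s + 2)) := by
  obtain ⟨t, rfl⟩ : ∃ t, s = t + 2 := ⟨s - 2, by lia⟩
  have hdesc : ((2 * t + 7).descFactorial (2 * t + 5) : ℚ) = (2 * t + 7)! / 2 := by
    have h := Nat.factorial_mul_descFactorial (show 2 * t + 5 ≤ 2 * t + 7 by lia)
    rw [Nat.add_sub_add_left, Nat.factorial_two] at h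
    rw [← h]
    push_cast
    ring
  rw [show 2 * (t + 2) + 3 = 2 * t + 7 by ring, show 2 * (t + 2) + 1 = 2 * t + 5 by ring, hdesc,
    show 3 * (t + 2) + 2 = 3 * t + 8 by ring, show t + 2 + 2 = t + 4 by ring,
    show 2 * (t + 2) - 3 = 2 * t + 1 by lia, show 3 * (t + 2) = 3 * t + 6 by ring,
    show t + 2 - 1 = t + 1 by lia]
  simp only [Nat.factorial_succ (_ + _), Nat.factorial_succ t]
  push_cast
  field_simp
  ring

/-- For `i₁ = 3`, `i_j = 1` for `2 ≤ j ≤ 2s−2` and `i_{2s−1} = i_{2s} = i_{2s+1} = 0`, the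
determinant of the `(2s+1)×(2s+1)` matrix with `(j,ℓ)`-entry `r(s − 1 + i_j − j + ℓ)`
equals `(s(2s+1)(s−1)(s+1)²(s+2)(2s−1)(2s+3)/(3(3s+1)(3s+2)))·∏_{k=0}^{2s} k!/(s+k)!`. -/
theorem harris_tu_determinant_cube_theta (s : ℕ) (hs : 2 ≤ s) :
    Matrix.det (Matrix.of fun j ℓ : Fin (2*s + 1) =>
        rfact ((s : ℤ) - 1 +
          (if (j : ℕ) = 0 then 3 else if (j : ℕ) < 2*s - 2 then 1 else 0) +
          (ℓ : ℕ) - (j : ℕ))) =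
      (s : ℚ) * (2*(s : ℚ) + 1) * ((s : ℚ) - 1) * ((s : ℚ) + 1)^2 * ((s : ℚ) + 2) *
          (2*(s : ℚ) - 1) * (2*(s : ℚ) + 3) / (3 * (3*(s : ℚ) + 1) * (3*(s : ℚ) + 2)) *
        ∏ k ∈ Finset.range (2*s + 1),
          (Nat.factorial k : ℚ) / (Nat.factorial (s + k) : ℚ) := by
  have hne : 2 * s + 3 ≠ 3 := by lia
  rw [← det_submatrix_equiv_self Fin.revPerm, submatrix_revPerm_eq_rfactMatrix s hs,
    rfactMatrix.det_snoc_interval_succAbove _ _ hne, prod_factorial_div_factorial_add_eq_shift,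
    ← mul_assoc, ← node_exchange_factor_eq s hs, show s - 1 + (2 * s + 3) = 3 * s + 2 by lia,
    show s - 1 + 3 = s + 2 by lia, show s - 1 + (2 * s + 1) = 3 * s by lia,
    show s - 1 + 1 = s by lia]
  push_cast
  rw [add_sub_cancel_right]
end
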